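/- Let 𝒫₂ = {AABB, ABBA}, where AABB is the 2-pattern {{1,2},{3,4}} and ABBA is the 2-pattern {{1,4},{2,3}}. Then asymptotically almost surely z_{𝒫₂}(RM_n^(2)) = Θ(n^(1/2)); that is, there exist constants c₁, c₂ > 0 such that the probability that c₁·n^(1/2) ≤ z_{𝒫₂}(RM_n^(2)) ≤ c₂·n^(1/2) tends to 1 as n → ∞. -/

import Mathlib

open Finset
open scoped Classical

/-- An ordered `r`-matching of size `n`: a partition of `[r*n] = {1,…,r*n}` into `n`
pairwise disjoint `r`-element subsets (the edges). -/
def IsOrderedMatching (r n : ℕ) (M : Finset (Finset ℕ)) : Prop :=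
  M.card = n ∧ (∀ e ∈ M, e.card = r) ∧
  (∀ e ∈ M, ∀ f ∈ M, e ≠ f → Disjoint e f) ∧
  M.biUnion id = Finset.Icc 1 (r * n)

/-- Two disjoint `r`-element sets `e`, `f` form the `r`-pattern `P`: the unique
order-preserving bijection from `e ∪ f` onto `[2r]` maps the pair `{e, f}` onto `P`. -/
def FormsPattern (r : ℕ) (e f : Finset ℕ) (P : Finset (Finset ℕ)) : Prop :=
  ∃ φ : ℕ → ℕ, StrictMonoOn φ ↑(e ∪ f) ∧
    (e ∪ f).image φ = Finset.Icc 1 (2 * r) ∧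
    ({e.image φ, f.image φ} : Finset (Finset ℕ)) = P

/-- A `Ps`-clique: a family of pairwise disjoint `r`-element subsets of `ℕ`, every two of
which form a pattern belonging to `Ps`. -/
def IsClique (r : ℕ) (Ps : Set (Finset (Finset ℕ))) (K : Finset (Finset ℕ)) : Prop :=
  (∀ e ∈ K, e.card = r) ∧ (∀ e ∈ K, ∀ f ∈ K, e ≠ f → Disjoint e f) ∧
  (∀ e ∈ K, ∀ f ∈ K, e ≠ f → ∃ P ∈ Ps, FormsPattern r e f P)

/-- `z_Ps(M)`: the maximum size of a subfamily of `M` that is a `Ps`-clique. -/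
noncomputable def zClique (r : ℕ) (Ps : Set (Finset (Finset ℕ))) (M : Finset (Finset ℕ)) : ℕ :=
  sSup {k | ∃ K : Finset (Finset ℕ), K ⊆ M ∧ IsClique r Ps K ∧ K.card = k}

/-- All ordered `r`-matchings of size `n` (as a finset). -/
noncomputable def matchingFamilies (r n : ℕ) : Finset (Finset (Finset ℕ)) :=
  ((Finset.Icc 1 (r * n)).powerset.powerset).filter (IsOrderedMatching r n)

/-- The probability of the event `A` for a uniformly random ordered `r`-matching of size `n`. -/
noncomputable def prob (r n : ℕ) (A : Finset (Finset ℕ) → Prop) : ℝ :=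
  (((matchingFamilies r n).filter A).card : ℝ) / ((matchingFamilies r n).card : ℝ)

/-- Expectation of `X` with respect to a uniformly random ordered `r`-matching of size `n`. -/
noncomputable def expect (r n : ℕ) (X : Finset (Finset ℕ) → ℝ) : ℝ :=
  (∑ M ∈ matchingFamilies r n, X M) / ((matchingFamilies r n).card : ℝ)

/-- An `r`-partite `r`-pattern: each edge contains exactly one of `{2i-1, 2i}` for each
`i = 1, …, r`. -/
def IsPartitePattern (r : ℕ) (P : Finset (Finset ℕ)) : Prop :=
  IsOrderedMatching r 2 P ∧
  ∀ e ∈ P, ∀ i ∈ Finset.Icc 1 r, (e ∩ {2 * i - 1, 2 * i}).card = 1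

/-- An `r`-pattern `P` is collectable if there exist arbitrarily large `{P}`-cliques. -/
def Collectable (r : ℕ) (P : Finset (Finset ℕ)) : Prop :=
  ∀ k : ℕ, ∃ K : Finset (Finset ℕ), IsClique r {P} K ∧ K.card = k

/-- The word of a pattern `P` over `{A=true, B=false}`: the `j`-th letter is `true` iff
vertex `j` lies in the edge of `P` containing `1`. -/
noncomputable def patternWord (r : ℕ) (P : Finset (Finset ℕ)) : List Bool :=
  (List.range (2 * r)).map (fun j => decide (∃ e ∈ P, 1 ∈ e ∧ j + 1 ∈ e))

/-- `lam` is a splitting of the word `w` into consecutive blocks of the form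
`A^t B^t` or `B^t A^t` with half-lengths given by `lam`. -/
def IsBlockSplitting (w : List Bool) (lam : List ℕ) : Prop :=
  (∀ t ∈ lam, 1 ≤ t) ∧
  ∃ bs : List Bool, bs.length = lam.length ∧
    w = (List.zipWith (fun t b => List.replicate t b ++ List.replicate t !b) lam bs).flatten

/-- The pattern `P` has composition `lam` (the sequence of half-lengths of the blocks of
its unique splitting). -/
def HasComposition (r : ℕ) (P : Finset (Finset ℕ)) (lam : List ℕ) : Prop :=
  IsBlockSplitting (patternWord r P) lam

/-- Two distinct collectable `r`-patterns are harmonious if they have the same composition. -/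
def Harmonious (r : ℕ) (P Q : Finset (Finset ℕ)) : Prop :=
  P ≠ Q ∧ Collectable r P ∧ Collectable r Q ∧
  ∃ lam : List ℕ, HasComposition r P lam ∧ HasComposition r Q lam

/-- A pair of distinct `r`-patterns is a mismatch if exactly one of them is collectable, or
both are collectable but their compositions differ. -/
def Mismatch (r : ℕ) (P Q : Finset (Finset ℕ)) : Prop :=
  P ≠ Q ∧
  ((Collectable r P ∧ ¬ Collectable r Q) ∨
   (¬ Collectable r P ∧ Collectable r Q) ∨
   (Collectable r P ∧ Collectable r Q ∧
     ¬ ∃ lam : List ℕ, HasComposition r P lam ∧ HasComposition r Q lam))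

/-- The trace of an ordered `r`-matching of size `k` on `[rk]`: the `j`-th letter equals
`i` when `j` is the `i`-th smallest element of the edge containing `j`. -/
noncomputable def trace (r k : ℕ) (M : Finset (Finset ℕ)) : List ℕ :=
  (List.range (r * k)).map (fun j₀ =>
    ((Finset.Icc 1 (r * k)).filter
      (fun x => x ≤ j₀ + 1 ∧ ∃ e ∈ M, j₀ + 1 ∈ e ∧ x ∈ e)).card)

/-- `a_Ps(k)`: the number of `Ps`-cliques of size `k` whose edges partition `[rk]`. -/
noncomputable def cliqueCount (r : ℕ) (Ps : Set (Finset (Finset ℕ))) (k : ℕ) : ℕ :=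
  (((Finset.Icc 1 (r * k)).powerset.powerset).filter
    (fun M => IsOrderedMatching r k M ∧ IsClique r Ps M)).card

/-- The maximum size of any `Ps`-clique whatsoever. -/
noncomputable def maxCliqueSize (r : ℕ) (Ps : Set (Finset (Finset ℕ))) : ℕ :=
  sSup {k | ∃ K : Finset (Finset ℕ), IsClique r Ps K ∧ K.card = k}

/-- `M` contains a copy of the ordered `r`-matching `H` of size `k`: a subfamily `N ⊆ M` of
`k` edges such that the order-preserving bijection from the union of the edges of `N`
onto `[rk]` maps `N` onto `H`. -/
def ContainsCopy (r k : ℕ) (H M : Finset (Finset ℕ)) : Prop :=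
  ∃ N ⊆ M, N.card = k ∧ ∃ φ : ℕ → ℕ,
    StrictMonoOn φ ↑(N.biUnion id) ∧
    (N.biUnion id).image φ = Finset.Icc 1 (r * k) ∧
    N.image (fun e => e.image φ) = H

/-- Delete the `j`-th smallest element of the finite set `e`. -/
def deleteJth (j : ℕ) (e : Finset ℕ) : Finset ℕ :=
  e.filter (fun x => (e.filter (· ≤ x)).card ≠ j)

/-- Relabel the elements of `e` order-preservingly by their ranks in `V`. -/
def relabel (V : Finset ℕ) (e : Finset ℕ) : Finset ℕ :=
  e.image (fun x => (V.filter (· ≤ x)).card)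

/-- `S^(−j)`: delete from each edge of the pattern `S` its `j`-th smallest element and
relabel the remaining vertices order-preservingly. -/
def patternDelete (j : ℕ) (S : Finset (Finset ℕ)) : Finset (Finset ℕ) :=
  (S.image (deleteJth j)).image (relabel ((S.image (deleteJth j)).biUnion id))

/-- The 2-pattern `AABB`. -/
def pAABB : Finset (Finset ℕ) := {{1, 2}, {3, 4}}
/-- The 2-pattern `ABBA`. -/
def pABBA : Finset (Finset ℕ) := {{1, 4}, {2, 3}}

/-- Perfect matchings of a finite set `V`. -/
noncomputable def PMat (V : Finset ℕ) : Finset (Finset (Finset ℕ)) :=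
  (V.powerset.powerset).filter (fun M => (∀ e ∈ M, e.card = 2) ∧
    (∀ e ∈ M, ∀ f ∈ M, e ≠ f → Disjoint e f) ∧ M.biUnion id = V)

/-- The number of perfect matchings on `2 * N` points. -/
def gpm : ℕ → ℕ
  | 0 => 1
  | (N + 1) => (2 * N + 1) * gpm N

lemma gpm_pos (N : ℕ) : 0 < gpm N := by
  induction N with
  | zero => simp [gpm]
  | succ N ih => simp [gpm, ih]

lemma mem_PMat {V : Finset ℕ} {M : Finset (Finset ℕ)} :
    M ∈ PMat V ↔ (∀ e ∈ M, e.card = 2) ∧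
    (∀ e ∈ M, ∀ f ∈ M, e ≠ f → Disjoint e f) ∧ M.biUnion id = V := by
  unfold PMat
  rw [Finset.mem_filter]
  constructor
  · exact fun h => h.2
  · intro h
    refine ⟨?_, h⟩
    rw [Finset.mem_powerset]
    intro e he
    rw [Finset.mem_powerset, ← h.2.2]
    exact Finset.subset_biUnion_of_mem id he

lemma card_of_mem_PMat {V : Finset ℕ} {M : Finset (Finset ℕ)} (h : M ∈ PMat V) :
    V.card = 2 * M.card := by
  obtain ⟨h1, h2, h3⟩ := mem_PMat.1 h
  rw [← h3, Finset.card_biUnion]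
  · simp only [id]
    rw [Finset.sum_congr rfl h1]; simp [mul_comm]
  · intro x hx y hy hxy
    exact h2 x hx y hy hxy

lemma matchingFamilies_eq (n : ℕ) : matchingFamilies 2 n = PMat (Finset.Icc 1 (2 * n)) := by
  ext M
  constructor
  · intro h
    have := (Finset.mem_filter.1 h).2
    exact mem_PMat.2 this.2
  · intro h
    have hc := card_of_mem_PMat h
    have h' := Finset.mem_filter.1 h
    refine Finset.mem_filter.2 ⟨h'.1, ?_, h'.2⟩
    simp at hc
    omega

lemma erase_mem_PMat {V : Finset ℕ} {M : Finset (Finset ℕ)} (h : M ∈ PMat V) {v w : ℕ}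
    (he : ({v, w} : Finset ℕ) ∈ M) : M.erase {v, w} ∈ PMat ((V.erase v).erase w) := by
  obtain ⟨h1, h2, h3⟩ := mem_PMat.1 h
  refine mem_PMat.2 ⟨fun e he => h1 e (Finset.mem_of_mem_erase he),
    fun e he f hf => h2 e (Finset.mem_of_mem_erase he) f (Finset.mem_of_mem_erase hf), ?_⟩
  ext x
  simp only [Finset.mem_biUnion, Finset.mem_erase, id]
  rw [← h3]
  constructor
  · rintro ⟨e, ⟨hne, hM⟩, hx⟩
    have hd := h2 e hM _ he hne
    have := Finset.disjoint_left.1 hd hx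
    simp at this
    refine ⟨this.2, this.1, ?_⟩
    exact Finset.mem_biUnion.2 ⟨e, hM, hx⟩
  · rintro ⟨a, b, c⟩
    obtain ⟨e, hM, hx⟩ := Finset.mem_biUnion.1 c
    refine ⟨e, ⟨?_, hM⟩, hx⟩
    rintro rfl
    simp at hx
    tauto

lemma insert_mem_PMat {V : Finset ℕ} {M : Finset (Finset ℕ)} {v w : ℕ} (hv : v ∈ V)
    (hw : w ∈ V.erase v) (h : M ∈ PMat ((V.erase v).erase w)) :
    ({v, w} : Finset ℕ) ∉ M ∧ insert {v, w} M ∈ PMat V := by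
  obtain ⟨h1, h2, h3⟩ := mem_PMat.1 h
  have hsub : ∀ e ∈ M, ∀ x ∈ e, x ∈ V ∧ x ≠ v ∧ x ≠ w := by
    intro e he x hx
    have : x ∈ M.biUnion id := Finset.mem_biUnion.2 ⟨e, he, hx⟩
    rw [h3] at this
    simp at this
    tauto
  have hwv : w ≠ v ∧ w ∈ V := by simpa using hw
  have hd : ∀ e ∈ M, Disjoint e ({v, w} : Finset ℕ) := by
    intro e he
    rw [Finset.disjoint_left]
    intro x hx
    have := hsub e he x hx
    simp; tauto
  refine ⟨fun hm => ?_, mem_PMat.2 ⟨?_, ?_, ?_⟩⟩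
  · exact (hsub _ hm v (by simp)).2.1 rfl
  · intro e he
    rcases Finset.mem_insert.1 he with rfl | he
    · exact Finset.card_pair hwv.1.symm
    · exact h1 e he
  · intro e he f hf hne
    rcases Finset.mem_insert.1 he with rfl | he <;> rcases Finset.mem_insert.1 hf with rfl | hf
    · exact absurd rfl hne
    · exact (hd f hf).symm
    · exact hd e he
    · exact h2 e he f hf hne
  · rw [Finset.biUnion_insert, h3]
    ext x
    simp
    by_cases hxv : x = v
    · simp [hxv, hv]
    · by_cases hxw : x = w
      · simp [hxw, hwv]
      · simp [hxv, hxw]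

lemma card_filter_PMat (V : Finset ℕ) (v : ℕ) (hv : v ∈ V) (A : Finset (Finset ℕ) → Prop) :
    ((PMat V).filter A).card = ∑ w ∈ V.erase v,
      ((PMat ((V.erase v).erase w)).filter (fun M => A (insert {v, w} M))).card := by
  have h1 : (PMat V).filter A = (V.erase v).biUnion
      (fun w => (PMat V).filter (fun M => A M ∧ ({v, w} : Finset ℕ) ∈ M)) := by
    ext M
    simp only [Finset.mem_filter, Finset.mem_biUnion]
    constructor
    · rintro ⟨hM, hA⟩
      obtain ⟨h1, h2, h3⟩ := mem_PMat.1 hM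
      have hv' := hv
      rw [← h3] at hv'
      obtain ⟨e, he, hve⟩ := Finset.mem_biUnion.1 hv'
      obtain ⟨x, y, hxy, rfl⟩ := Finset.card_eq_two.1 (h1 e he)
      have hmem : ∀ z ∈ ({x, y} : Finset ℕ), z ∈ V := by
        intro z hz
        rw [← h3]
        exact Finset.mem_biUnion.2 ⟨_, he, hz⟩
      simp at hve
      rcases hve with rfl | rfl
      · exact ⟨y, by simp [hmem, hxy.symm], hM, hA, he⟩
      · exact ⟨x, by simp [hmem, hxy], hM, hA, by rwa [Finset.pair_comm]⟩
    · rintro ⟨w, _, h, h', _⟩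
      exact ⟨h, h'⟩
  rw [h1, Finset.card_biUnion]
  · refine Finset.sum_congr rfl fun w hw => ?_
    refine Finset.card_nbij' (fun M => M.erase {v, w}) (fun M => insert {v, w} M) ?_ ?_ ?_ ?_
    · intro M hM
      simp only [Finset.coe_filter, Set.mem_ofPred_eq] at hM ⊢
      refine ⟨erase_mem_PMat hM.1 hM.2.2, ?_⟩
      rw [Finset.insert_erase hM.2.2]
      exact hM.2.1
    · intro M hM
      simp only [Finset.coe_filter, Set.mem_ofPred_eq] at hM ⊢
      exact ⟨(insert_mem_PMat hv hw hM.1).2, hM.2, Finset.mem_insert_self _ _⟩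
    · intro M hM
      simp only [Finset.coe_filter, Set.mem_ofPred_eq] at hM ⊢
      exact Finset.insert_erase hM.2.2
    · intro M hM
      simp only [Finset.coe_filter, Set.mem_ofPred_eq] at hM ⊢
      exact Finset.erase_insert (insert_mem_PMat hv hw hM.1).1
  · intro w hw w' hw' hne
    rw [Function.onFun, Finset.disjoint_left]
    intro M hM hM'
    simp only [Finset.mem_filter] at hM hM'
    obtain ⟨_, h2, _⟩ := mem_PMat.1 hM.1
    have hne' : ({v, w} : Finset ℕ) ≠ {v, w'} := by
      intro h
      have : w ∈ ({v, w'} : Finset ℕ) := by rw [← h]; simp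
      simp at this hw
      tauto
    have := h2 _ hM.2.2 _ hM'.2.2 hne'
    exact (Finset.disjoint_left.1 this (Finset.mem_insert_self _ _)) (Finset.mem_insert_self _ _)

lemma card_erase_erase {V : Finset ℕ} {v w : ℕ} {N : ℕ} (hv : v ∈ V) (hw : w ∈ V.erase v)
    (hN : V.card = 2 * (N + 1)) : ((V.erase v).erase w).card = 2 * N := by
  rw [Finset.card_erase_of_mem hw, Finset.card_erase_of_mem hv]; omega

lemma card_PMat (N : ℕ) : ∀ V : Finset ℕ, V.card = 2 * N → (PMat V).card = gpm N := by
  induction N with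
  | zero =>
    intro V hV
    have : V = ∅ := by simpa using hV
    subst this
    have : PMat ∅ = {∅} := by
      ext M
      rw [Finset.mem_singleton]
      constructor
      · intro h
        have := card_of_mem_PMat h
        simpa using this
      · rintro rfl
        simp [mem_PMat]
    simp [this, gpm]
  | succ N ih =>
    intro V hV
    obtain ⟨v, hv⟩ : V.Nonempty := by
      rw [← Finset.card_pos]; omega
    have := card_filter_PMat V v hv (fun _ => True)
    simp only [Finset.filter_true] at this
    rw [this, Finset.sum_congr rfl fun w hw => ih _ (card_erase_erase hv hw hV)]
    rw [Finset.sum_const, Finset.card_erase_of_mem hv, hV, gpm, smul_eq_mul]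
    congr 1

/-- No monochromatic edge inside `U`. -/
def NoMono (c : ℕ → ℕ) (U : Finset ℕ) (M : Finset (Finset ℕ)) : Prop :=
  ∀ e ∈ M, ¬ (e ⊆ U ∧ ∀ x ∈ e, ∀ y ∈ e, c x = c y)

/-- Matchings of `V` with no monochromatic edge inside `U`. -/
noncomputable def badM (c : ℕ → ℕ) (V U : Finset ℕ) : Finset (Finset (Finset ℕ)) :=
  (PMat V).filter (NoMono c U)

lemma card_badM (c : ℕ → ℕ) (m q n : ℕ) (hq : q ≤ 2 * n) (hn : 0 < n) (j : ℕ) :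
    ∀ (N : ℕ) (V U : Finset ℕ), V.card = 2 * N → N ≤ n → U ⊆ V → (∀ x ∈ U, c x < m) →
      m * q + 2 * j ≤ U.card →
      ((badM c V U).card : ℝ) ≤ (1 - (q : ℝ) / (2 * n)) ^ j * gpm N := by
  have hn' : (0 : ℝ) < 2 * n := by positivity
  have hfac : (0 : ℝ) ≤ 1 - (q : ℝ) / (2 * n) := by
    rw [sub_nonneg, div_le_one hn']
    exact_mod_cast hq
  induction j with
  | zero =>
    intro N V U hV _ _ _ _
    rw [pow_zero, one_mul, ← card_PMat N V hV]
    exact_mod_cast Finset.card_filter_le _ _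
  | succ j ih =>
    intro N V U hV hNn hUV hc hU
    have hlt : (Finset.range m).card * q < U.card := by
      rw [Finset.card_range]; omega
    obtain ⟨b, hb, hbq⟩ := Finset.exists_lt_card_fiber_of_mul_lt_card_of_maps_to
      (f := c) (t := Finset.range m) (s := U) (fun x hx => Finset.mem_range.2 (hc x hx)) hlt
    obtain ⟨v, hvb⟩ : (U.filter (fun x => c x = b)).Nonempty := by
      rw [← Finset.card_pos]; omega
    have hvU := (Finset.mem_filter.1 hvb).1
    have hv := hUV hvU
    set F := (U.filter (fun x => c x = b)).erase v with hF
    have hFc : q ≤ F.card := by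
      rw [hF, Finset.card_erase_of_mem hvb]; omega
    have hFV : F ⊆ V.erase v := by
      intro x hx
      simp only [hF, Finset.mem_erase, Finset.mem_filter] at hx ⊢
      exact ⟨hx.1, hUV hx.2.1⟩
    obtain ⟨N, rfl⟩ : ∃ N', N = N' + 1 := by
      refine ⟨N - 1, ?_⟩
      have : 0 < V.card := Finset.card_pos.2 ⟨v, hv⟩
      omega
    have hVc : (V.erase v).card = 2 * N + 1 := by
      rw [Finset.card_erase_of_mem hv]; omega
    have hcount := card_filter_PMat V v hv (NoMono c U)
    have hle : (badM c V U).card ≤ ∑ w ∈ V.erase v \ F,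
        (badM c ((V.erase v).erase w) ((U.erase v).erase w)).card := by
      unfold badM
      rw [hcount, ← Finset.sum_sdiff hFV]
      have h0 : ∑ w ∈ F, ((PMat ((V.erase v).erase w)).filter (fun M =>
          NoMono c U (insert {v, w} M))).card = 0 := by
        refine Finset.sum_eq_zero fun w hw => ?_
        rw [Finset.card_eq_zero, Finset.filter_eq_empty_iff]
        intro M _ h
        have hw' : w ≠ v ∧ w ∈ U ∧ c w = b := by
          simpa [hF] using hw
        have hv' : c v = b := (Finset.mem_filter.1 hvb).2
        refine h {v, w} (Finset.mem_insert_self _ _) ⟨?_, ?_⟩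
        · intro x hx
          simp at hx
          rcases hx with rfl | rfl
          · exact hvU
          · exact hw'.2.1
        · have : ∀ x ∈ ({v, w} : Finset ℕ), c x = b := by
            intro x hx
            simp at hx
            rcases hx with rfl | rfl
            · exact hv'
            · exact hw'.2.2
          intro x hx y hy
          rw [this x hx, this y hy]
      rw [h0, add_zero]
      refine Finset.sum_le_sum fun w _ => Finset.card_le_card ?_
      intro M hM
      rw [Finset.mem_filter] at hM ⊢
      refine ⟨hM.1, fun e he h => hM.2 e (Finset.mem_insert_of_mem he) ⟨?_, h.2⟩⟩
      exact h.1.trans ((Finset.erase_subset _ _).trans (Finset.erase_subset _ _))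
    have hterm : ∀ w ∈ V.erase v \ F,
        ((badM c ((V.erase v).erase w) ((U.erase v).erase w)).card : ℝ) ≤
          (1 - (q : ℝ) / (2 * n)) ^ j * gpm N := by
      intro w hw
      have hw' := (Finset.mem_sdiff.1 hw).1
      refine ih N _ _ (card_erase_erase hv hw' hV) (by omega) ?_ ?_ ?_
      · exact Finset.erase_subset_erase _ (Finset.erase_subset_erase _ hUV)
      · intro x hx
        exact hc x (Finset.mem_of_mem_erase (Finset.mem_of_mem_erase hx))
      · have h1 := Finset.card_erase_of_mem hvU
        have h2 := Finset.pred_card_le_card_erase (s := U.erase v) (a := w)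
        omega
    have hcard : ((V.erase v \ F).card : ℝ) ≤ (1 - (q : ℝ) / (2 * n)) * (2 * N + 1) := by
      have h1 : (V.erase v \ F).card + q ≤ 2 * N + 1 := by
        rw [← hVc, ← Finset.card_sdiff_add_card_eq_card hFV]; omega
      have h1' : ((V.erase v \ F).card : ℝ) + q ≤ 2 * N + 1 := by exact_mod_cast h1
      have h2 : (q : ℝ) / (2 * n) * (2 * N + 1) ≤ q := by
        have h3 : (2 * (N : ℝ) + 1) ≤ 2 * n := by
          have : 2 * N + 1 ≤ 2 * n := by omega
          exact_mod_cast this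
        calc (q : ℝ) / (2 * n) * (2 * N + 1) ≤ (q : ℝ) / (2 * n) * (2 * n) := by gcongr
          _ = q := by field_simp
      nlinarith
    calc ((badM c V U).card : ℝ) ≤ ∑ w ∈ V.erase v \ F,
        ((badM c ((V.erase v).erase w) ((U.erase v).erase w)).card : ℝ) := by exact_mod_cast hle
      _ ≤ ∑ w ∈ V.erase v \ F, (1 - (q : ℝ) / (2 * n)) ^ j * gpm N := Finset.sum_le_sum hterm
      _ = (V.erase v \ F).card * ((1 - (q : ℝ) / (2 * n)) ^ j * gpm N) := by
        rw [Finset.sum_const, nsmul_eq_mul]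
      _ ≤ ((1 - (q : ℝ) / (2 * n)) * (2 * N + 1)) * ((1 - (q : ℝ) / (2 * n)) ^ j * gpm N) := by
        gcongr
      _ = _ := by
        rw [gpm]; push_cast; ring

lemma card_contain (N k : ℕ) (V : Finset ℕ) (hV : V.card = 2 * (N + k)) (K : Finset (Finset ℕ))
    (hK : K.card = k) :
    ((PMat V).filter (fun M => K ⊆ M)).card ≤ gpm N := by
  rcases Finset.eq_empty_or_nonempty ((PMat V).filter (fun M => K ⊆ M)) with h | ⟨M₀, hM₀⟩
  · rw [h]; simp
  · have hmap : ∀ M ∈ (PMat V).filter (fun M => K ⊆ M), M \ K ∈ PMat (V \ K.biUnion id) := by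
      intro M hM
      obtain ⟨hM, hKM⟩ := Finset.mem_filter.1 hM
      obtain ⟨h1, h2, h3⟩ := mem_PMat.1 hM
      refine mem_PMat.2 ⟨fun e he => h1 e (Finset.mem_sdiff.1 he).1,
        fun e he f hf => h2 e (Finset.mem_sdiff.1 he).1 f (Finset.mem_sdiff.1 hf).1, ?_⟩
      rw [← h3]
      ext x
      simp only [Finset.mem_biUnion, Finset.mem_sdiff, id]
      constructor
      · rintro ⟨e, ⟨heM, heK⟩, hx⟩
        refine ⟨⟨e, heM, hx⟩, ?_⟩
        rintro ⟨f, hf, hxf⟩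
        have hne : e ≠ f := by rintro rfl; exact heK hf
        exact Finset.disjoint_left.1 (h2 e heM f (hKM hf) hne) hx hxf
      · rintro ⟨⟨e, heM, hx⟩, hn⟩
        exact ⟨e, ⟨heM, fun heK => hn ⟨e, heK, hx⟩⟩, hx⟩
    have hc : (V \ K.biUnion id).card = 2 * N := by
      have h1 := card_of_mem_PMat (hmap M₀ hM₀)
      have h2 := card_of_mem_PMat (Finset.mem_filter.1 hM₀).1
      have h3 := Finset.card_sdiff_add_card_eq_card (Finset.mem_filter.1 hM₀).2
      omega
    rw [← card_PMat N _ hc]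
    refine Finset.card_le_card_of_injOn (fun M => M \ K) hmap ?_
    intro M hM M' hM' h
    have hM := (Finset.mem_filter.1 hM).2
    have hM' := (Finset.mem_filter.1 hM').2
    simp only at h
    rw [← Finset.sdiff_union_of_subset hM, h, Finset.sdiff_union_of_subset hM']

lemma gpm_ge (n N k : ℕ) (h : n ≤ 2 * N + 1) : n ^ k * gpm N ≤ gpm (N + k) := by
  induction k with
  | zero => simp
  | succ k ih =>
    rw [← add_assoc, gpm, pow_succ]
    calc n ^ k * n * gpm N = n * (n ^ k * gpm N) := by ring
      _ ≤ (2 * (N + k) + 1) * gpm (N + k) := Nat.mul_le_mul (by omega) ih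

/-- noncrossing families of pairs inside `V`, of size `k`. -/
def NonCr (V : Finset ℕ) (k : ℕ) (K : Finset (Finset ℕ)) : Prop :=
  K.card = k ∧ (∀ e ∈ K, e.card = 2) ∧ (∀ e ∈ K, e ⊆ V) ∧
    (∀ e ∈ K, ∀ f ∈ K, e ≠ f → Disjoint e f) ∧
    (∀ e ∈ K, ∀ f ∈ K, e ≠ f → ¬ ∃ a ∈ e, ∃ b ∈ f, ∃ c ∈ e, ∃ d ∈ f, a < b ∧ b < c ∧ c < d)

/-- the set of left ends -/
noncomputable def lefts (K : Finset (Finset ℕ)) : Finset ℕ :=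
  (K.biUnion id).filter (fun x => ∃ y, x < y ∧ ({x, y} : Finset ℕ) ∈ K)
/-- the set of right ends -/
noncomputable def rights (K : Finset (Finset ℕ)) : Finset ℕ :=
  (K.biUnion id).filter (fun x => ∃ y, y < x ∧ ({y, x} : Finset ℕ) ∈ K)

lemma mem_lefts {K : Finset (Finset ℕ)} {x : ℕ} :
    x ∈ lefts K ↔ ∃ y, x < y ∧ ({x, y} : Finset ℕ) ∈ K := by
  unfold lefts
  rw [Finset.mem_filter]
  refine ⟨fun h => h.2, fun h => ⟨?_, h⟩⟩
  obtain ⟨y, _, hy⟩ := h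
  exact Finset.mem_biUnion.2 ⟨_, hy, by simp⟩

lemma mem_rights {K : Finset (Finset ℕ)} {x : ℕ} :
    x ∈ rights K ↔ ∃ y, y < x ∧ ({y, x} : Finset ℕ) ∈ K := by
  unfold rights
  rw [Finset.mem_filter]
  refine ⟨fun h => h.2, fun h => ⟨?_, h⟩⟩
  obtain ⟨y, _, hy⟩ := h
  exact Finset.mem_biUnion.2 ⟨_, hy, by simp⟩

lemma exists_lt_pair {e : Finset ℕ} (h : e.card = 2) : ∃ x y, x < y ∧ e = {x, y} := by
  obtain ⟨x, y, hxy, rfl⟩ := Finset.card_eq_two.1 h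
  rcases lt_or_gt_of_ne hxy with h | h
  · exact ⟨x, y, h, rfl⟩
  · exact ⟨y, x, h, Finset.pair_comm _ _⟩

lemma card_ends_le {V : Finset ℕ} {k : ℕ} {K : Finset (Finset ℕ)} (h : NonCr V k K) :
    (lefts K ∈ V.powersetCard k) ∧ (rights K ∈ V.powersetCard k) := by
  obtain ⟨h1, h2, h3, h4, h5⟩ := h
  constructor
  · rw [Finset.mem_powersetCard]
    constructor
    · intro x hx
      obtain ⟨y, _, hy⟩ := mem_lefts.1 hx
      exact h3 _ hy (by simp)
    · rw [← h1]
      symm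
      refine Finset.card_bij (fun e he => e.min' (by rw [← Finset.card_pos, h2 e he]; norm_num))
        ?_ ?_ ?_
      · intro e he
        obtain ⟨x, y, hxy, rfl⟩ := exists_lt_pair (h2 e he)
        refine mem_lefts.2 ⟨y, ?_, ?_⟩
        · simp [hxy]
        · simpa [hxy.le] using he
      · intro e he f hf hef
        by_contra hne
        have hen : e.Nonempty := by rw [← Finset.card_pos, h2 e he]; norm_num
        have := Finset.disjoint_left.1 (h4 e he f hf hne) (Finset.min'_mem e hen)
        exact this (by rw [hef]; exact Finset.min'_mem _ _)
      · intro x hx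
        obtain ⟨y, hxy, hy⟩ := mem_lefts.1 hx
        exact ⟨_, hy, by simp [hxy.le]⟩
  · rw [Finset.mem_powersetCard]
    constructor
    · intro x hx
      obtain ⟨y, _, hy⟩ := mem_rights.1 hx
      exact h3 _ hy (by simp)
    · rw [← h1]
      symm
      refine Finset.card_bij (fun e he => e.max' (by rw [← Finset.card_pos, h2 e he]; norm_num))
        ?_ ?_ ?_
      · intro e he
        obtain ⟨x, y, hxy, rfl⟩ := exists_lt_pair (h2 e he)
        refine mem_rights.2 ⟨x, ?_, ?_⟩
        · simp [hxy]
        · simpa [hxy.le] using he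
      · intro e he f hf hef
        by_contra hne
        have hen : e.Nonempty := by rw [← Finset.card_pos, h2 e he]; norm_num
        have := Finset.disjoint_left.1 (h4 e he f hf hne) (Finset.max'_mem e hen)
        exact this (by rw [hef]; exact Finset.max'_mem _ _)
      · intro x hx
        obtain ⟨y, hxy, hy⟩ := mem_rights.1 hx
        exact ⟨_, hy, by simp [hxy.le]⟩

lemma pair_unique {K : Finset (Finset ℕ)} (h : ∀ e ∈ K, ∀ f ∈ K, e ≠ f → Disjoint e f)
    {e f : Finset ℕ} (he : e ∈ K) (hf : f ∈ K) {x : ℕ} (hx : x ∈ e) (hxf : x ∈ f) : e = f := by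
  by_contra hne
  exact Finset.disjoint_left.1 (h e he f hf hne) hx hxf

/-- the one-sided step of the injectivity argument -/
lemma nonCr_step {V : Finset ℕ} {k : ℕ} {K K' : Finset (Finset ℕ)} (h : NonCr V k K)
    (h' : NonCr V k K') (hR : rights K = rights K') (x : ℕ)
    (hmax : ∀ z > x, ∀ y, z < y → (({z, y} : Finset ℕ) ∈ K ↔ ({z, y} : Finset ℕ) ∈ K'))
    {y y' : ℕ} (hxy : x < y) (hy : ({x, y} : Finset ℕ) ∈ K) (hyy' : y < y')
    (hy' : ({x, y'} : Finset ℕ) ∈ K') : False := by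
  have hyR : y ∈ rights K' := by
    rw [← hR]; exact mem_rights.2 ⟨x, hxy, hy⟩
  obtain ⟨z, hzy, hz⟩ := mem_rights.1 hyR
  rcases lt_trichotomy z x with hlt | rfl | hgt
  · have hne : ({z, y} : Finset ℕ) ≠ {x, y'} := by
      intro heq
      have : z ∈ ({x, y'} : Finset ℕ) := by rw [← heq]; simp
      simp at this; omega
    exact h'.2.2.2.2 _ hz _ hy' hne ⟨z, by simp, x, by simp, y, by simp, y', by simp, hlt, hxy, hyy'⟩
  · have heq := pair_unique h'.2.2.2.1 hz hy' (x := z) (by simp) (by simp)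
    have : y ∈ ({z, y'} : Finset ℕ) := by rw [← heq]; simp
    simp at this; omega
  · have hzK := (hmax z hgt y hzy).2 hz
    have heq := pair_unique h.2.2.2.1 hzK hy (x := y) (by simp) (by simp)
    have : x ∈ ({z, y} : Finset ℕ) := by rw [heq]; simp
    simp at this; omega

lemma nonCr_iff {V : Finset ℕ} {k : ℕ} {K K' : Finset (Finset ℕ)} (h : NonCr V k K)
    (h' : NonCr V k K') (hL : lefts K = lefts K') (hR : rights K = rights K') :
    ∀ d : ℕ, ∀ x, V.sup id < x + d → ∀ y, x < y →
      (({x, y} : Finset ℕ) ∈ K ↔ ({x, y} : Finset ℕ) ∈ K') := by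
  intro d
  induction d with
  | zero =>
    intro x hx y hxy
    have key : ∀ {K : Finset (Finset ℕ)}, NonCr V k K → ({x, y} : Finset ℕ) ∉ K := by
      intro K h hm
      have : x ∈ V := h.2.2.1 _ hm (by simp)
      have := Finset.le_sup (f := id) this
      simp at this hx
      omega
    exact ⟨fun hm => absurd hm (key h), fun hm => absurd hm (key h')⟩
  | succ d ih =>
    intro x hx y hxy
    have hmax : ∀ z > x, ∀ y, z < y → (({z, y} : Finset ℕ) ∈ K ↔ ({z, y} : Finset ℕ) ∈ K') :=
      fun z hz => ih z (by omega)
    constructor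
    · intro hm
      have : x ∈ lefts K' := by rw [← hL]; exact mem_lefts.2 ⟨y, hxy, hm⟩
      obtain ⟨y', hxy', hy'⟩ := mem_lefts.1 this
      rcases lt_trichotomy y y' with hlt | rfl | hgt
      · exact (nonCr_step h h' hR x hmax hxy hm hlt hy').elim
      · exact hy'
      · exact (nonCr_step h' h hR.symm x (fun z hz y hy => (hmax z hz y hy).symm)
          hxy' hy' hgt hm).elim
    · intro hm
      have : x ∈ lefts K := by rw [hL]; exact mem_lefts.2 ⟨y, hxy, hm⟩
      obtain ⟨y', hxy', hy'⟩ := mem_lefts.1 this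
      rcases lt_trichotomy y y' with hlt | rfl | hgt
      · exact (nonCr_step h' h hR.symm x (fun z hz y hy => (hmax z hz y hy).symm)
          hxy hm hlt hy').elim
      · exact hy'
      · exact (nonCr_step h h' hR x hmax hxy' hy' hgt hm).elim

lemma nonCr_inj {V : Finset ℕ} {k : ℕ} {K K' : Finset (Finset ℕ)} (h : NonCr V k K)
    (h' : NonCr V k K') (hL : lefts K = lefts K') (hR : rights K = rights K') : K = K' := by
  have key := fun x y hxy => nonCr_iff h h' hL hR (V.sup id + 1) x (by omega) y hxy
  ext e
  constructor
  · intro he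
    obtain ⟨x, y, hxy, rfl⟩ := exists_lt_pair (h.2.1 e he)
    exact (key x y hxy).1 he
  · intro he
    obtain ⟨x, y, hxy, rfl⟩ := exists_lt_pair (h'.2.1 e he)
    exact (key x y hxy).2 he

/-- all noncrossing families -/
noncomputable def nonCrFam (V : Finset ℕ) (k : ℕ) : Finset (Finset (Finset ℕ)) :=
  (V.powerset.powerset).filter (NonCr V k)

lemma mem_nonCrFam {V : Finset ℕ} {k : ℕ} {K : Finset (Finset ℕ)} :
    K ∈ nonCrFam V k ↔ NonCr V k K := by
  unfold nonCrFam
  rw [Finset.mem_filter]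
  refine ⟨fun h => h.2, fun h => ⟨?_, h⟩⟩
  rw [Finset.mem_powerset]
  intro e he
  exact Finset.mem_powerset.2 (h.2.2.1 e he)

lemma card_nonCrFam (V : Finset ℕ) (k : ℕ) :
    (nonCrFam V k).card ≤ (V.card.choose k) * (V.card.choose k) := by
  rw [← Finset.card_powersetCard, ← Finset.card_product]
  refine Finset.card_le_card_of_injOn (fun K => (lefts K, rights K)) ?_ ?_
  · intro K hK
    have := card_ends_le (mem_nonCrFam.1 hK)
    exact Finset.mem_product.2 this
  · intro K hK K' hK' heq
    simp only [Prod.mk.injEq] at heq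
    exact nonCr_inj (mem_nonCrFam.1 hK) (mem_nonCrFam.1 hK') heq.1 heq.2

/-- matchings containing a large noncrossing family -/
lemma card_upper (n k : ℕ) (hk : 2 * k ≤ n) :
    ((((PMat (Finset.Icc 1 (2 * n))).filter
      (fun M => ∃ K, K ⊆ M ∧ NonCr (Finset.Icc 1 (2 * n)) k K)).card : ℝ)) * n ^ k * (k.factorial) ^ 2
      ≤ (2 * n) ^ (2 * k) * gpm n := by
  set V := Finset.Icc 1 (2 * n) with hV
  have hVc : V.card = 2 * n := by simp [hV]
  have h1 : ((PMat V).filter (fun M => ∃ K, K ⊆ M ∧ NonCr V k K)).card ≤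
      ((2 * n).choose k) * ((2 * n).choose k) * gpm (n - k) := by
    calc _ ≤ ((nonCrFam V k).biUnion (fun K => (PMat V).filter (fun M => K ⊆ M))).card := by
          refine Finset.card_le_card ?_
          intro M hM
          obtain ⟨hM, K, hKM, hK⟩ := Finset.mem_filter.1 hM
          exact Finset.mem_biUnion.2 ⟨K, mem_nonCrFam.2 hK, Finset.mem_filter.2 ⟨hM, hKM⟩⟩
      _ ≤ (nonCrFam V k).card * gpm (n - k) := by
          refine Finset.card_biUnion_le_card_mul _ _ _ ?_
          intro K hK
          refine card_contain (n - k) k V ?_ K (mem_nonCrFam.1 hK).1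
          rw [hVc]; omega
      _ ≤ _ := by
          refine Nat.mul_le_mul_right _ ?_
          have := card_nonCrFam V k
          rwa [hVc] at this
  have h2 : n ^ k * gpm (n - k) ≤ gpm n := by
    have := gpm_ge n (n - k) k (by omega)
    rwa [Nat.sub_add_cancel (by omega)] at this
  have h3 : (2 * n).choose k * k.factorial ≤ (2 * n) ^ k := by
    rw [mul_comm, ← Nat.descFactorial_eq_factorial_mul_choose]
    exact Nat.descFactorial_le_pow _ _
  have h4 : ((PMat V).filter (fun M => ∃ K, K ⊆ M ∧ NonCr V k K)).card * n ^ k * (k.factorial) ^ 2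
      ≤ (2 * n) ^ (2 * k) * gpm n := by
    calc _ ≤ ((2 * n).choose k) * ((2 * n).choose k) * gpm (n - k) * n ^ k * (k.factorial) ^ 2 := by
          gcongr
      _ = ((2 * n).choose k * k.factorial) * ((2 * n).choose k * k.factorial) *
          (n ^ k * gpm (n - k)) := by ring
      _ ≤ (2 * n) ^ k * (2 * n) ^ k * gpm n := by gcongr
      _ = _ := by ring
  exact_mod_cast h4

lemma pattern_nonCr {e f : Finset ℕ} {P : Finset (Finset ℕ)}
    (hP : P ∈ ({pAABB, pABBA} : Set (Finset (Finset ℕ)))) (h : FormsPattern 2 e f P) :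
    ¬ ∃ a ∈ e, ∃ b ∈ f, ∃ c ∈ e, ∃ d ∈ f, a < b ∧ b < c ∧ c < d := by
  rintro ⟨a, ha, b, hb, c, hc, d, hd, hab, hbc, hcd⟩
  obtain ⟨φ, hmono, him, heq⟩ := h
  have ha' : a ∈ (↑(e ∪ f) : Set ℕ) := by simp [ha]
  have hb' : b ∈ (↑(e ∪ f) : Set ℕ) := by simp [hb]
  have hc' : c ∈ (↑(e ∪ f) : Set ℕ) := by simp [hc]
  have hd' : d ∈ (↑(e ∪ f) : Set ℕ) := by simp [hd]
  have h1 := hmono ha' hb' hab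
  have h2 := hmono hb' hc' hbc
  have h3 := hmono hc' hd' hcd
  have h4 : φ a ∈ Finset.Icc 1 (2 * 2) := by
    rw [← him]; exact Finset.mem_image_of_mem _ ha'
  have h5 : φ d ∈ Finset.Icc 1 (2 * 2) := by
    rw [← him]; exact Finset.mem_image_of_mem _ hd'
  simp at h4 h5
  have e1 : φ a = 1 := by omega
  have e3 : φ c = 3 := by omega
  have hm : e.image φ ∈ P := by rw [← heq]; simp
  have m1 : 1 ∈ e.image φ := by rw [← e1]; exact Finset.mem_image_of_mem _ ha
  have m3 : 3 ∈ e.image φ := by rw [← e3]; exact Finset.mem_image_of_mem _ hc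
  generalize e.image φ = E at hm m1 m3
  rcases hP with rfl | rfl
  · simp [pAABB] at hm
    rcases hm with rfl | rfl <;> simp at m1 m3
  · simp [pABBA] at hm
    rcases hm with rfl | rfl <;> simp at m1 m3

lemma forms_AABB {a b c d : ℕ} (h1 : a < b) (h2 : b < c) (h3 : c < d) :
    FormsPattern 2 {a, b} {c, d} pAABB := by
  set φ : ℕ → ℕ := fun x => if x ≤ a then 1 else if x ≤ b then 2 else if x ≤ c then 3 else 4 with hφ
  have ea : φ a = 1 := by simp only [hφ]; split_ifs <;> omega
  have eb : φ b = 2 := by simp only [hφ]; split_ifs <;> omega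
  have ec : φ c = 3 := by simp only [hφ]; split_ifs <;> omega
  have ed : φ d = 4 := by simp only [hφ]; split_ifs <;> omega
  refine ⟨φ, ?_, ?_, ?_⟩
  · intro x hx y hy hxy
    simp at hx hy
    rcases hx with rfl | rfl | rfl | rfl <;> rcases hy with rfl | rfl | rfl | rfl <;> omega
  · ext x
    simp [Finset.image_insert, ea, eb, ec, ed]
    omega
  · simp [Finset.image_insert, ea, eb, ec, ed, pAABB]

lemma forms_symm {r : ℕ} {e f : Finset ℕ} {P : Finset (Finset ℕ)} (h : FormsPattern r e f P) :
    FormsPattern r f e P := by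
  obtain ⟨φ, h1, h2, h3⟩ := h
  refine ⟨φ, ?_, ?_, ?_⟩
  · rwa [Finset.union_comm]
  · rwa [Finset.union_comm]
  · rwa [Finset.pair_comm]

lemma forms_of_lt {e f : Finset ℕ} (he : e.card = 2) (hf : f.card = 2)
    (h : ∀ x ∈ e, ∀ y ∈ f, x < y) : FormsPattern 2 e f pAABB := by
  obtain ⟨a, b, hab, rfl⟩ := exists_lt_pair he
  obtain ⟨c, d, hcd, rfl⟩ := exists_lt_pair hf
  exact forms_AABB hab (h b (by simp) c (by simp)) hcd

lemma bdd_z (r : ℕ) (Ps : Set (Finset (Finset ℕ))) (M : Finset (Finset ℕ)) :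
    BddAbove {k | ∃ K : Finset (Finset ℕ), K ⊆ M ∧ IsClique r Ps K ∧ K.card = k} := by
  refine ⟨M.card, ?_⟩
  rintro k ⟨K, hK, _, rfl⟩
  exact Finset.card_le_card hK

/-- upper side, deterministic -/
lemma z_upper {V : Finset ℕ} {M : Finset (Finset ℕ)} (hM : M ∈ PMat V) (k : ℕ)
    (hz : k ≤ zClique 2 {pAABB, pABBA} M) : ∃ K, K ⊆ M ∧ NonCr V k K := by
  have hne : {k | ∃ K : Finset (Finset ℕ), K ⊆ M ∧ IsClique 2 {pAABB, pABBA} K ∧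
      K.card = k}.Nonempty := ⟨0, ∅, by simp, by simp [IsClique], by simp⟩
  obtain ⟨K, hKM, hK, hKc⟩ := Nat.sSup_mem hne (bdd_z _ _ _)
  change K.card = zClique 2 {pAABB, pABBA} M at hKc
  rw [← hKc] at hz
  obtain ⟨K', hK', hc⟩ := Finset.exists_subset_card_eq hz
  obtain ⟨h1, h2, h3⟩ := mem_PMat.1 hM
  refine ⟨K', hK'.trans hKM, hc, fun e he => hK.1 e (hK' he), ?_,
    fun e he f hf => hK.2.1 e (hK' he) f (hK' hf), ?_⟩
  · intro e he
    rw [← h3]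
    exact Finset.subset_biUnion_of_mem id (hKM (hK' he))
  · intro e he f hf hne
    obtain ⟨P, hP, hF⟩ := hK.2.2 e (hK' he) f (hK' hf) hne
    exact pattern_nonCr hP hF

/-- colours of monochromatic edges -/
noncomputable def occ (c : ℕ → ℕ) (m : ℕ) (M : Finset (Finset ℕ)) : Finset ℕ :=
  (Finset.range m).filter (fun b => ∃ e ∈ M, ∀ x ∈ e, c x = b)

/-- lower side, deterministic -/
lemma z_lower {V : Finset ℕ} {M : Finset (Finset ℕ)} (hM : M ∈ PMat V) (c : ℕ → ℕ)
    (hc : Monotone c) (m : ℕ) : (occ c m M).card ≤ zClique 2 {pAABB, pABBA} M := by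
  obtain ⟨h1, h2, h3⟩ := mem_PMat.1 hM
  have hex : ∀ b : ℕ, ∃ e, b ∈ occ c m M → e ∈ M ∧ ∀ x ∈ e, c x = b := by
    intro b
    by_cases hb : b ∈ occ c m M
    · obtain ⟨e, he, h⟩ := (Finset.mem_filter.1 hb).2
      exact ⟨e, fun _ => ⟨he, h⟩⟩
    · exact ⟨∅, fun h => absurd h hb⟩
  choose E hE using hex
  have hlt : ∀ b ∈ occ c m M, ∀ b' ∈ occ c m M, b < b' → FormsPattern 2 (E b) (E b') pAABB := by
    intro b hb b' hb' hlt
    refine forms_of_lt (h1 _ (hE b hb).1) (h1 _ (hE b' hb').1) ?_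
    intro x hx y hy
    by_contra hxy
    have := hc (not_lt.1 hxy)
    rw [(hE b hb).2 x hx, (hE b' hb').2 y hy] at this
    omega
  refine le_csSup (bdd_z _ _ _) ⟨(occ c m M).image E, ?_, ⟨?_, ?_, ?_⟩, ?_⟩
  · intro e he
    obtain ⟨b, hb, rfl⟩ := Finset.mem_image.1 he
    exact (hE b hb).1
  · intro e he
    obtain ⟨b, hb, rfl⟩ := Finset.mem_image.1 he
    exact h1 _ (hE b hb).1
  · intro e he f hf hne
    obtain ⟨b, hb, rfl⟩ := Finset.mem_image.1 he
    obtain ⟨b', hb', rfl⟩ := Finset.mem_image.1 hf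
    exact h2 _ (hE b hb).1 _ (hE b' hb').1 hne
  · intro e he f hf hne
    obtain ⟨b, hb, rfl⟩ := Finset.mem_image.1 he
    obtain ⟨b', hb', rfl⟩ := Finset.mem_image.1 hf
    refine ⟨pAABB, by simp, ?_⟩
    rcases lt_trichotomy b b' with h | rfl | h
    · exact hlt b hb b' hb' h
    · exact absurd rfl hne
    · exact forms_symm (hlt b' hb' b hb h)
  · refine Finset.card_image_of_injOn ?_
    intro b hb b' hb' heq
    have hcard := h1 _ (hE b hb).1
    obtain ⟨x, hx⟩ : (E b).Nonempty := by rw [← Finset.card_pos]; omega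
    rw [← (hE b hb).2 x hx, ← (hE b' hb').2 x (heq ▸ hx)]

/-- matchings with few occupied blocks -/
lemma card_lower (n s m q j k : ℕ) (hn : 0 < n) (hq : q ≤ 2 * n) (hs : 0 < s)
    (hm : 2 * n < s * m)
    (hU : m * q + 2 * j + k * s ≤ 2 * n) :
    (((PMat (Finset.Icc 1 (2 * n))).filter
      (fun M => (occ (fun x => x / s) m M).card < k)).card : ℝ) ≤
      2 ^ m * ((1 - (q : ℝ) / (2 * n)) ^ j * gpm n) := by
  set V := Finset.Icc 1 (2 * n) with hV
  have hVc : V.card = 2 * n := by simp [hV]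
  set c : ℕ → ℕ := fun x => x / s with hcdef
  have hcm : ∀ x ∈ V, c x < m := by
    intro x hx
    have : x ≤ 2 * n := (Finset.mem_Icc.1 hx).2
    exact Nat.div_lt_of_lt_mul (by omega)
  set S := (Finset.range m).powerset.filter (fun O => O.card < k) with hS
  have h1 : (PMat V).filter (fun M => (occ c m M).card < k) ⊆
      S.biUnion (fun O => badM c V (V.filter (fun x => c x ∉ O))) := by
    intro M hM
    obtain ⟨hM, hlt⟩ := Finset.mem_filter.1 hM
    refine Finset.mem_biUnion.2 ⟨occ c m M, ?_, ?_⟩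
    · exact Finset.mem_filter.2 ⟨Finset.mem_powerset.2 (Finset.filter_subset _ _), hlt⟩
    · refine Finset.mem_filter.2 ⟨hM, ?_⟩
      rintro e he ⟨heU, hmono⟩
      obtain ⟨h1, h2, h3⟩ := mem_PMat.1 hM
      have hcard := h1 e he
      obtain ⟨x, hx⟩ : e.Nonempty := by rw [← Finset.card_pos]; omega
      have hxU := Finset.mem_filter.1 (heU hx)
      refine hxU.2 (Finset.mem_filter.2 ⟨Finset.mem_range.2 (hcm x hxU.1), e, he, ?_⟩)
      intro y hy
      exact hmono y hy x hx
  have h2 : ∀ O ∈ S, ((badM c V (V.filter (fun x => c x ∉ O))).card : ℝ) ≤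
      (1 - (q : ℝ) / (2 * n)) ^ j * gpm n := by
    intro O hO
    have hOk := (Finset.mem_filter.1 hO).2
    refine card_badM c m q n hq hn j n V _ hVc le_rfl (Finset.filter_subset _ _)
      (fun x hx => hcm x (Finset.mem_filter.1 hx).1) ?_
    have h3 := Finset.card_filter_add_card_filter_not (s := V) (fun x => c x ∉ O)
    have h4 : (V.filter (fun x => ¬ (c x ∉ O))).card ≤ O.card * s := by
      rw [mul_comm]
      refine Finset.card_le_mul_card_image_of_maps_to (f := c) ?_ s ?_
      · intro x hx
        simpa using (Finset.mem_filter.1 hx).2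
      · intro b _
        calc _ ≤ (Finset.Ico (s * b) (s * b + s)).card := by
              refine Finset.card_le_card ?_
              intro x hx
              have hxb : x / s = b := (Finset.mem_filter.1 hx).2
              have e1 := Nat.div_add_mod x s
              have e2 := Nat.mod_lt x hs
              rw [hxb] at e1
              rw [Finset.mem_Ico]
              omega
          _ = s := by simp
    have h5 : O.card * s ≤ k * s := Nat.mul_le_mul_right _ hOk.le
    omega
  have hn' : (0 : ℝ) < 2 * n := by positivity
  have hfac : (0 : ℝ) ≤ 1 - (q : ℝ) / (2 * n) := by
    rw [sub_nonneg, div_le_one hn']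
    exact_mod_cast hq
  have h3 : (S.card : ℝ) ≤ 2 ^ m := by
    have : S.card ≤ 2 ^ m := by
      calc S.card ≤ (Finset.range m).powerset.card := Finset.card_filter_le _ _
        _ = 2 ^ m := by simp
    exact_mod_cast this
  calc _ ≤ ((S.biUnion (fun O => badM c V (V.filter (fun x => c x ∉ O)))).card : ℝ) := by
        exact_mod_cast Finset.card_le_card h1
    _ ≤ ∑ O ∈ S, ((badM c V (V.filter (fun x => c x ∉ O))).card : ℝ) := by
        exact_mod_cast Finset.card_biUnion_le
    _ ≤ ∑ O ∈ S, (1 - (q : ℝ) / (2 * n)) ^ j * gpm n := Finset.sum_le_sum h2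
    _ = S.card * ((1 - (q : ℝ) / (2 * n)) ^ j * gpm n) := by
        rw [Finset.sum_const, nsmul_eq_mul]
    _ ≤ _ := by gcongr

lemma upper_real (n : ℕ) (hn : 0 < n) (A : ℕ) (hA : n ≤ A ^ 2) (hA0 : 0 < A) (hk : 2 * (12 * A) ≤ n) :
    ((((PMat (Finset.Icc 1 (2 * n))).filter
      (fun M => ∃ K, K ⊆ M ∧ NonCr (Finset.Icc 1 (2 * n)) (12 * A) K)).card : ℝ))
      ≤ (1 / 4) ^ A * gpm n := by
  have h := card_upper n (12 * A) hk
  set C : ℝ := ((((PMat (Finset.Icc 1 (2 * n))).filter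
      (fun M => ∃ K, K ⊆ M ∧ NonCr (Finset.Icc 1 (2 * n)) (12 * A) K)).card : ℝ)) with hC
  set k := 12 * A with hkdef
  have hn' : (0 : ℝ) < n := by exact_mod_cast hn
  have hC0 : 0 ≤ C := by positivity
  have hfac : ((k : ℝ) / 3) ^ k ≤ k.factorial := by
    have h1 := Real.pow_div_factorial_le_exp (k : ℝ) (by positivity) k
    have h2 : Real.exp (k : ℝ) ≤ 3 ^ k := by
      rw [← Real.exp_one_pow]
      gcongr
      exact Real.exp_one_lt_three.le
    rw [div_pow, div_le_iff₀ (by positivity)]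
    rw [div_le_iff₀ (by positivity)] at h1
    calc (k : ℝ) ^ k ≤ Real.exp k * k.factorial := h1
      _ ≤ 3 ^ k * k.factorial := by gcongr
      _ = _ := by ring
  have h16 : (16 * (n : ℝ)) ^ k ≤ (k.factorial : ℝ) ^ 2 := by
    have hA' : (n : ℝ) ≤ (A : ℝ) ^ 2 := by exact_mod_cast hA
    calc (16 * (n : ℝ)) ^ k ≤ (((k : ℝ) / 3) ^ 2) ^ k := by
          gcongr
          rw [hkdef]; push_cast; nlinarith
      _ = (((k : ℝ) / 3) ^ k) ^ 2 := pow_right_comm _ _ _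
      _ ≤ _ := by gcongr
  have h3 : C * (n : ℝ) ^ k * (16 * (n : ℝ)) ^ k ≤ (2 * n) ^ (2 * k) * gpm n :=
    le_trans (by gcongr) h
  have h4 : (2 * (n : ℝ)) ^ (2 * k) = (n : ℝ) ^ k * (16 * (n : ℝ)) ^ k * (1 / 4) ^ k := by
    rw [pow_mul, ← mul_pow, ← mul_pow]; congr 1; ring
  have h5 : C ≤ (1 / 4) ^ k * gpm n := by
    have hpos : 0 < (n : ℝ) ^ k * (16 * (n : ℝ)) ^ k := by positivity
    refine le_of_mul_le_mul_left ?_ hpos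
    rw [h4] at h3
    linarith
  refine h5.trans ?_
  have : ((1 : ℝ) / 4) ^ k ≤ (1 / 4) ^ A :=
    pow_le_pow_of_le_one (by norm_num) (by norm_num) (by omega)
  gcongr

lemma lower_real (n : ℕ) (A : ℕ) (hA : n < A ^ 2) (hA' : (A - 1) ^ 2 ≤ n) (hA0 : 100 ≤ A) :
    (((PMat (Finset.Icc 1 (2 * n))).filter
      (fun M => (occ (fun x => x / (16 * A)) (A / 8 + 1) M).card < n / (32 * A))).card : ℝ) ≤
      Real.exp (1 - (A : ℝ) / 24) * gpm n := by
  obtain ⟨B, rfl⟩ : ∃ B, A = B + 1 := ⟨A - 1, by omega⟩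
  simp only [Nat.add_sub_cancel] at hA'
  set A := B + 1 with hAB
  have hB : 99 ≤ B := by omega
  have hnB : 99 * B ≤ n := le_trans (by nlinarith) hA'
  have hm8 : 8 * (A / 8) ≤ A := Nat.mul_div_le _ _
  have hm8' : A < 8 * (A / 8 + 1) := by omega
  set m := A / 8 + 1 with hm
  have hmq : 2 * (m * A) ≤ n := by
    have : 8 * m ≤ A + 8 := by omega
    nlinarith
  have hks : 2 * (n / (32 * A) * (16 * A)) ≤ n := by
    calc _ = n / (32 * A) * (32 * A) := by ring
      _ ≤ n := Nat.div_mul_le_self _ _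
  have h := card_lower n (16 * A) m A (n / 2) (n / (32 * A)) (by omega) (by omega) (by omega)
    (by nlinarith) (by omega)
  refine h.trans ?_
  have hn' : (0 : ℝ) < n := by
    have : 0 < n := by omega
    exact_mod_cast this
  rw [← mul_assoc]
  refine mul_le_mul_of_nonneg_right ?_ (by positivity)
  have h2 : (2 : ℝ) ^ m ≤ Real.exp m := by
    rw [← Real.exp_one_pow]
    gcongr
    have := Real.add_one_le_exp (1 : ℝ)
    linarith
  have hfac : (0 : ℝ) ≤ 1 - (A : ℝ) / (2 * n) := by
    rw [sub_nonneg, div_le_one (by positivity)]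
    have : A ≤ 2 * n := by omega
    exact_mod_cast this
  have h3 : (1 - (A : ℝ) / (2 * n)) ^ (n / 2) ≤ Real.exp (-(A : ℝ) / 6) := by
    calc (1 - (A : ℝ) / (2 * n)) ^ (n / 2) ≤ (Real.exp (-((A : ℝ) / (2 * n)))) ^ (n / 2) := by
          gcongr
          exact Real.one_sub_le_exp_neg _
      _ = Real.exp (((n / 2 : ℕ) : ℝ) * (-((A : ℝ) / (2 * n)))) := by
          rw [← Real.exp_nat_mul]
      _ ≤ _ := by
          rw [Real.exp_le_exp]
          have hj : (n : ℝ) / 3 ≤ ((n / 2 : ℕ) : ℝ) := by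
            have : n ≤ 3 * (n / 2) := by omega
            have : (n : ℝ) ≤ 3 * ((n / 2 : ℕ) : ℝ) := by exact_mod_cast this
            linarith
          have h6 : (A : ℝ) / 6 = (n : ℝ) / 3 * ((A : ℝ) / (2 * n)) := by
            field_simp; norm_num
          have : (n : ℝ) / 3 * ((A : ℝ) / (2 * n)) ≤ ((n / 2 : ℕ) : ℝ) * ((A : ℝ) / (2 * n)) := by
            gcongr
          linarith
  calc _ ≤ Real.exp m * Real.exp (-(A : ℝ) / 6) := by gcongr
    _ = Real.exp (m + -(A : ℝ) / 6) := by rw [Real.exp_add]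
    _ ≤ _ := by
      rw [Real.exp_le_exp]
      have : 8 * m ≤ A + 8 := by omega
      have : 8 * (m : ℝ) ≤ A + 8 := by exact_mod_cast this
      linarith

lemma main_bound (n : ℕ) (hn : 100000 ≤ n) :
    1 - (Real.exp (1 - ((Nat.sqrt n + 1 : ℕ) : ℝ) / 24) + (1 / 4) ^ (Nat.sqrt n + 1)) ≤
    prob 2 n (fun M =>
          (1 / 128) * (n : ℝ) ^ ((1 : ℝ) / 2) ≤ (zClique 2 {pAABB, pABBA} M : ℝ) ∧
          (zClique 2 {pAABB, pABBA} M : ℝ) ≤ 24 * (n : ℝ) ^ ((1 : ℝ) / 2)) := by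
  have hs1 : Nat.sqrt n ^ 2 ≤ n := Nat.sqrt_le' n
  have hs2 : n < (Nat.sqrt n + 1) ^ 2 := Nat.lt_succ_sqrt' n
  set B := Nat.sqrt n with hB
  have hB300 : 300 ≤ B := by
    by_contra hlt
    have : B + 1 ≤ 300 := by omega
    nlinarith
  set V := Finset.Icc 1 (2 * n) with hV
  have hVc : V.card = 2 * n := by simp [hV]
  set A := B + 1 with hA
  have hAn : 2 * (12 * A) ≤ n := by nlinarith
  have h1 := lower_real n A hs2 (by simpa [hA] using hs1) (by omega)
  have h2 := upper_real n (by omega) A hs2.le (by omega) hAn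
  have hsqrt : (n : ℝ) ^ ((1 : ℝ) / 2) = Real.sqrt n := (Real.sqrt_eq_rpow _).symm
  unfold prob
  rw [matchingFamilies_eq, hsqrt, ← hV, card_PMat n V hVc]
  rw [← hV] at h1 h2
  set good : Finset (Finset ℕ) → Prop := fun M =>
    (1 / 128) * Real.sqrt n ≤ (zClique 2 {pAABB, pABBA} M : ℝ) ∧
          (zClique 2 {pAABB, pABBA} M : ℝ) ≤ 24 * Real.sqrt n with hgood
  set X1 := (PMat V).filter
      (fun M => (occ (fun x => x / (16 * A)) (A / 8 + 1) M).card < n / (32 * A)) with hX1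
  set X2 := (PMat V).filter (fun M => ∃ K, K ⊆ M ∧ NonCr V (12 * A) K) with hX2
  have hgp : (0 : ℝ) < gpm n := by exact_mod_cast gpm_pos n
  have hBs : (B : ℝ) ≤ Real.sqrt n := by
    refine Real.le_sqrt_of_sq_le ?_
    exact_mod_cast hs1
  have hAs : Real.sqrt n ≤ A := by
    refine Real.sqrt_le_iff.2 ⟨by positivity, ?_⟩
    exact_mod_cast hs2.le
  have hAB : (A : ℝ) = B + 1 := by rw [hA]; push_cast; ring
  have hB300' : (300 : ℝ) ≤ B := by exact_mod_cast hB300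
  have hsub : PMat V ⊆ (PMat V).filter good ∪ (X1 ∪ X2) := by
    intro M hM
    by_cases hx1 : M ∈ X1
    · simp [hx1]
    by_cases hx2 : M ∈ X2
    · simp [hx2]
    refine Finset.mem_union_left _ (Finset.mem_filter.2 ⟨hM, ?_, ?_⟩)
    · have hocc : n / (32 * A) ≤ (occ (fun x => x / (16 * A)) (A / 8 + 1) M).card := by
        by_contra hlt
        exact hx1 (Finset.mem_filter.2 ⟨hM, not_le.1 hlt⟩)
      have hz := hocc.trans (z_lower hM (fun x => x / (16 * A))
        (fun x y hxy => Nat.div_le_div_right hxy) (A / 8 + 1))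
      have hz' : ((n / (32 * A) : ℕ) : ℝ) ≤ (zClique 2 {pAABB, pABBA} M : ℝ) := by
        exact_mod_cast hz
      refine le_trans ?_ hz'
      have hlt : n < 32 * A * (n / (32 * A) + 1) := Nat.lt_mul_div_succ n (by omega)
      have hlt' : (n : ℝ) < 32 * A * ((n / (32 * A) : ℕ) + 1) := by exact_mod_cast hlt
      have hsq : Real.sqrt n * Real.sqrt n = n := Real.mul_self_sqrt (by positivity)
      set t : ℝ := ((n / (32 * A) : ℕ) : ℝ)
      by_contra hcon
      push Not at hcon
      have ht : t + 1 ≤ 1 / 128 * Real.sqrt n + 1 := by linarith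
      have : (32 * (A : ℝ)) * (t + 1) ≤
          (32 * (Real.sqrt n + 1)) * (1 / 128 * Real.sqrt n + 1) := by
        have ht0 : 0 ≤ t := by positivity
        have : (A : ℝ) ≤ Real.sqrt n + 1 := by linarith
        gcongr
      nlinarith
    · have hz : zClique 2 {pAABB, pABBA} M < 12 * A := by
        by_contra hlt
        exact hx2 (Finset.mem_filter.2 ⟨hM, z_upper hM _ (not_lt.1 hlt)⟩)
      have hz' : (zClique 2 {pAABB, pABBA} M : ℝ) < 12 * A := by exact_mod_cast hz
      linarith
  have hcard : gpm n ≤ ((PMat V).filter good).card + (X1.card + X2.card) := by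
    rw [← card_PMat n V hVc]
    refine (Finset.card_le_card hsub).trans ((Finset.card_union_le _ _).trans ?_)
    have := Finset.card_union_le X1 X2
    omega
  have hcard' : (gpm n : ℝ) ≤ ((PMat V).filter good).card + (X1.card + X2.card) := by
    exact_mod_cast hcard
  rw [le_div_iff₀ hgp]
  generalize ((1 : ℝ) / 4) ^ A = x at h2 ⊢
  generalize Real.exp (1 - (A : ℝ) / 24) = y at h1 ⊢
  have hfin : (1 - (y + x)) * (gpm n : ℝ) ≤ ((PMat V).filter good).card := by linarith
  refine hfin.trans (le_of_eq ?_)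
  congr!

/-- **Theorem.** A.a.s. `z_{{AABB, ABBA}}(RM_n^(2)) = Θ(n^(1/2))`. -/
theorem aas_P2_pair :
    ∃ c₁ c₂ : ℝ, 0 < c₁ ∧ 0 < c₂ ∧
      Filter.Tendsto
        (fun n : ℕ => prob 2 n (fun M =>
          c₁ * (n : ℝ) ^ ((1 : ℝ) / 2) ≤ (zClique 2 {pAABB, pABBA} M : ℝ) ∧
          (zClique 2 {pAABB, pABBA} M : ℝ) ≤ c₂ * (n : ℝ) ^ ((1 : ℝ) / 2)))
        Filter.atTop (nhds 1) := by
  refine ⟨1 / 128, 24, by norm_num, by norm_num, ?_⟩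
  have hsq : Filter.Tendsto (fun n : ℕ => Nat.sqrt n + 1) Filter.atTop Filter.atTop := by
    refine Filter.tendsto_atTop.2 fun b => ?_
    filter_upwards [Filter.eventually_ge_atTop (b * b)] with n hn
    exact (Nat.le_sqrt.2 hn).trans (Nat.le_succ _)
  have hlim : Filter.Tendsto (fun A : ℕ => 1 - (Real.exp (1 - (A : ℝ) / 24) + (1 / 4 : ℝ) ^ A))
      Filter.atTop (nhds (1 - (0 + 0))) := by
    refine Filter.Tendsto.sub tendsto_const_nhds (Filter.Tendsto.add ?_ ?_)
    · refine Real.tendsto_exp_atBot.comp ?_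
      refine Filter.tendsto_atBot_add_const_left _ 1 ?_ |>.congr (fun A => (sub_eq_add_neg _ _).symm)
      refine Filter.tendsto_neg_atTop_atBot.comp ?_
      exact tendsto_natCast_atTop_atTop.atTop_div_const (by norm_num)
    · exact tendsto_pow_atTop_nhds_zero_of_lt_one (by norm_num) (by norm_num)
  have hlim' := hlim.comp hsq
  rw [add_zero, sub_zero] at hlim'
  refine tendsto_of_tendsto_of_tendsto_of_le_of_le' hlim' tendsto_const_nhds ?_ ?_
  · filter_upwards [Filter.eventually_ge_atTop 100000] with n hn
    exact main_bound n hn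
  · refine Filter.Eventually.of_forall fun n => ?_
    unfold prob
    refine div_le_one_of_le₀ ?_ (by positivity)
    exact_mod_cast Finset.card_filter_le _ _
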